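/- Let i ≥ 2 and j ≥ 1 be integers. Let r_i, r_j be independent random variables with r_i ∼ χ_{2i}, r_j ∼ χ_{2j}, and let r_2, r_j' be independent with r_2 ∼ χ_4, r_j' ∼ χ_{2j}. Then E[ln(r_i r_j/(r_i + r_j))] ≥ E[ln(r_2 r_j'/(r_2 + r_j'))] − (1/2) ln 2; explicitly, ∫_0^∞ ∫_0^∞ ln(√x·√y/(√x+√y)) ρ_i(x) ρ_j(y) dx dy ≥ ∫_0^∞ ∫_0^∞ ln(√x·√y/(√x+√y)) ρ_2(x) ρ_j(y) dx dy − (1/2) ln 2. -/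

import Mathlib

open MeasureTheory Finset

/-- Density of the chi-squared distribution with `2m` degrees of freedom:
`ρ_m(q) = q^{m−1} e^{−q/2} / (2^m (m−1)!)` on `(0,∞)`. -/
noncomputable def chi2Density (m : ℕ) (q : ℝ) : ℝ :=
  q ^ (m - 1) * Real.exp (-q / 2) / (2 ^ m * Nat.factorial (m - 1))

/-! The quantity `uv / (u + v)` is increasing in `u`, and the gamma family (of which `χ²_{2m}` is
the member of shape `m` and rate `1/2`) increases with its shape in the likelihood ratio order: the
density of shape `b` with respect to shape `a` is proportional to `x ^ (b - a)`. Chebyshev's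
association inequality `∫ f · ∫ g ≤ ∫ f g` for similarly ordered `f` and `g` and a probability
measure, applied with `g` the likelihood ratio, shows that the expectation of an increasing function
increases with the shape. By Fubini this may be used for each fixed value of the second variable. -/

open ProbabilityTheory
open scoped NNReal

section Chebyshev

variable {α : Type*} [MeasurableSpace α] {μ ν : Measure α} [IsProbabilityMeasure μ]
  {f : α → ℝ} {s : Set α}

theorem integral_mul_integral_le_integral_mul_of_monovaryOn {g : α → ℝ}
    (hs : ∀ᵐ x ∂μ, x ∈ s) (hfg : MonovaryOn f g s) (hf : Integrable f μ) (hg : Integrable g μ)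
    (hmul : Integrable (fun x ↦ f x * g x) μ) :
    (∫ x, f x ∂μ) * ∫ x, g x ∂μ ≤ ∫ x, f x * g x ∂μ := by
  have hs' : ∀ᵐ z ∂μ.prod μ, z.1 ∈ s ∧ z.2 ∈ s :=
    (Measure.quasiMeasurePreserving_fst.ae hs).and (Measure.quasiMeasurePreserving_snd.ae hs)
  have cross_le_diag : ∫ z, (f z.1 * g z.2 + g z.1 * f z.2) ∂μ.prod μ ≤
      ∫ z, (f z.1 * g z.1 + f z.2 * g z.2) ∂μ.prod μ := by
    refine integral_mono_ae ((hf.mul_prod hg).add (hg.mul_prod hf))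
      ((hmul.comp_fst μ).add (hmul.comp_snd μ)) ?_
    filter_upwards [hs'] with z ⟨h₁, h₂⟩
    linarith [hfg.sub_mul_sub_nonneg h₁ h₂]
  rw [integral_add (hf.mul_prod hg) (hg.mul_prod hf),
    integral_add (hmul.comp_fst μ) (hmul.comp_snd μ), integral_prod_mul, integral_prod_mul,
    integral_fun_fst (fun x ↦ f x * g x), integral_fun_snd (fun x ↦ f x * g x)] at cross_le_diag
  simp only [probReal_univ, one_smul] at cross_le_diag
  linarith

theorem integral_le_integral_of_monovaryOn_density [IsProbabilityMeasure ν] {L : α → ℝ≥0}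
    (hL : Measurable L) (hν : ν = μ.withDensity fun x ↦ L x) (hs : ∀ᵐ x ∂μ, x ∈ s)
    (hfL : MonovaryOn f L s) (hfμ : Integrable f μ) (hfν : Integrable f ν) :
    ∫ x, f x ∂μ ≤ ∫ x, f x ∂ν := by
  have integral_ν (h : α → ℝ) : ∫ x, h x ∂ν = ∫ x, h x * L x ∂μ := by
    simp only [hν, integral_withDensity_eq_integral_smul hL, NNReal.smul_def, smul_eq_mul, mul_comm]
  have integrable_ν {h : α → ℝ} (hh : Integrable h ν) : Integrable (fun x ↦ h x * L x) μ := by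
    rw [hν, integrable_withDensity_iff_integrable_coe_smul hL] at hh
    simpa only [smul_eq_mul, mul_comm] using hh
  have integrable_L : Integrable (fun x ↦ (L x : ℝ)) μ := by
    simpa only [one_mul] using integrable_ν (integrable_const 1)
  have integral_L : ∫ x, (L x : ℝ) ∂μ = 1 := by simpa using (integral_ν fun _ ↦ 1).symm
  calc ∫ x, f x ∂μ = (∫ x, f x ∂μ) * ∫ x, (L x : ℝ) ∂μ := by rw [integral_L, mul_one]
    _ ≤ ∫ x, f x * L x ∂μ := integral_mul_integral_le_integral_mul_of_monovaryOn hs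
        (fun _ hx _ hy hxy ↦ hfL hx hy (NNReal.coe_lt_coe.mp hxy)) hfμ integrable_L
        (integrable_ν hfν)
    _ = ∫ x, f x ∂ν := (integral_ν f).symm

end Chebyshev

section Gamma

variable {a b r : ℝ}

lemma measurable_gammaPDF (a r : ℝ) : Measurable (gammaPDF a r) :=
  (measurable_gammaPDFReal a r).ennreal_ofReal

lemma ae_gammaMeasure_pos (a r : ℝ) : ∀ᵐ x ∂gammaMeasure a r, 0 < x := by
  rw [gammaMeasure, ae_withDensity_iff (measurable_gammaPDF a r)]
  filter_upwards [Measure.ae_ne volume 0] with x hx hpdf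
  by_contra hneg
  exact hpdf (gammaPDF_of_neg ((not_lt.mp hneg).lt_of_ne hx))

lemma integral_gammaMeasure (ha : 0 < a) (hr : 0 < r) (f : ℝ → ℝ) :
    ∫ x, f x ∂gammaMeasure a r = ∫ x in Set.Ioi 0, f x * gammaPDFReal a r x := by
  have restrict_eq : gammaMeasure a r = (gammaMeasure a r).restrict (Set.Ioi 0) :=
    (Measure.restrict_eq_self_of_ae_mem (ae_gammaMeasure_pos a r)).symm
  rw [restrict_eq, gammaMeasure, restrict_withDensity measurableSet_Ioi,
    integral_withDensity_eq_integral_toReal_smul (measurable_gammaPDF a r)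
      (ae_of_all _ fun _ ↦ ENNReal.ofReal_lt_top)]
  simp only [gammaPDF, ENNReal.toReal_ofReal (gammaPDFReal_nonneg ha hr _), smul_eq_mul, mul_comm]

/-- The likelihood ratio of the gamma distribution of shape `b` against the one of shape `a`, both
of rate `r`. It is only meaningful on `(0, ∞)`, which carries both distributions. -/
noncomputable def gammaLikelihoodRatio (a b r x : ℝ) : ℝ :=
  Real.Gamma a / Real.Gamma b * (r * x) ^ (b - a)

lemma measurable_gammaLikelihoodRatio (a b r : ℝ) : Measurable (gammaLikelihoodRatio a b r) := by
  unfold gammaLikelihoodRatio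
  fun_prop

lemma monotoneOn_gammaLikelihoodRatio (ha : 0 < a) (hab : a ≤ b) (hr : 0 < r) :
    MonotoneOn (gammaLikelihoodRatio a b r) (Set.Ioi 0) := by
  intro x (hx : 0 < x) y _ hxy
  have := Real.Gamma_pos_of_pos ha
  have := Real.Gamma_pos_of_pos (ha.trans_le hab)
  have : 0 ≤ b - a := sub_nonneg.mpr hab
  unfold gammaLikelihoodRatio
  gcongr

lemma gammaPDFReal_eq_mul_gammaLikelihoodRatio {x : ℝ} (ha : 0 < a) (hr : 0 < r) (hx : 0 < x) :
    gammaPDFReal b r x = gammaPDFReal a r x * gammaLikelihoodRatio a b r x := by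
  have hΓ : Real.Gamma a ≠ 0 := (Real.Gamma_pos_of_pos ha).ne'
  have hrb : r ^ b = r ^ a * r ^ (b - a) := by rw [← Real.rpow_add hr, add_sub_cancel]
  have hxb : x ^ (b - 1) = x ^ (a - 1) * x ^ (b - a) := by
    rw [← Real.rpow_add hx, sub_add_sub_cancel']
  rw [gammaPDFReal, gammaPDFReal, if_pos hx.le, if_pos hx.le, gammaLikelihoodRatio,
    Real.mul_rpow hr.le hx.le, hrb, hxb]
  field_simp

lemma gammaMeasure_eq_withDensity (ha : 0 < a) (hr : 0 < r) :
    gammaMeasure b r =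
      (gammaMeasure a r).withDensity fun x ↦ (gammaLikelihoodRatio a b r x).toNNReal := by
  rw [gammaMeasure, gammaMeasure, ← withDensity_mul _ (measurable_gammaPDF a r)
    (measurable_gammaLikelihoodRatio a b r).real_toNNReal.coe_nnreal_ennreal]
  refine withDensity_congr_ae ?_
  filter_upwards [Measure.ae_ne volume 0] with x hx
  rcases hx.lt_or_gt with hneg | hpos
  · simp only [Pi.mul_apply, gammaPDF_of_neg hneg, zero_mul]
  · rw [Pi.mul_apply, gammaPDF, gammaPDF, gammaPDFReal_eq_mul_gammaLikelihoodRatio ha hr hpos,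
      ENNReal.ofReal_mul (gammaPDFReal_nonneg ha hr x)]
    rfl

theorem integral_gammaMeasure_le_of_monotoneOn (ha : 0 < a) (hab : a ≤ b) (hr : 0 < r)
    {f : ℝ → ℝ} (hf : MonotoneOn f (Set.Ioi 0)) (hfa : Integrable f (gammaMeasure a r))
    (hfb : Integrable f (gammaMeasure b r)) :
    ∫ x, f x ∂gammaMeasure a r ≤ ∫ x, f x ∂gammaMeasure b r := by
  have := isProbabilityMeasure_gammaMeasure ha hr
  have := isProbabilityMeasure_gammaMeasure (ha.trans_le hab) hr
  have hL : MonotoneOn (fun x ↦ (gammaLikelihoodRatio a b r x).toNNReal) (Set.Ioi 0) :=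
    Real.toNNReal_monotone.comp_monotoneOn (monotoneOn_gammaLikelihoodRatio ha hab hr)
  exact integral_le_integral_of_monovaryOn_density
    (measurable_gammaLikelihoodRatio a b r).real_toNNReal (gammaMeasure_eq_withDensity ha hr)
    (ae_gammaMeasure_pos a r) (hf.monovaryOn hL) hfa hfb

lemma integrable_rpow_gammaMeasure {s : ℝ} (ha : 0 < a) (hr : 0 < r) (hs : 0 < a + s) :
    Integrable (fun x ↦ x ^ s) (gammaMeasure a r) := by
  have := isProbabilityMeasure_gammaMeasure hs hr
  have integrable_ratio : Integrable (fun x ↦ ((gammaLikelihoodRatio a (a + s) r x).toNNReal : ℝ))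
      (gammaMeasure a r) := by
    have h := integrable_const (μ := gammaMeasure (a + s) r) (1 : ℝ)
    rw [gammaMeasure_eq_withDensity ha hr, integrable_withDensity_iff_integrable_coe_smul
      (measurable_gammaLikelihoodRatio a (a + s) r).real_toNNReal] at h
    simpa only [smul_eq_mul, mul_one] using h
  have hc : 0 < Real.Gamma a / Real.Gamma (a + s) * r ^ s :=
    mul_pos (div_pos (Real.Gamma_pos_of_pos ha) (Real.Gamma_pos_of_pos hs))
      (Real.rpow_pos_of_pos hr s)
  refine (integrable_ratio.const_mul (Real.Gamma a / Real.Gamma (a + s) * r ^ s)⁻¹).congr ?_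
  filter_upwards [ae_gammaMeasure_pos a r] with x hx
  rw [gammaLikelihoodRatio, add_sub_cancel_left, Real.mul_rpow hr.le hx.le, ← mul_assoc,
    Real.coe_toNNReal _ (mul_nonneg hc.le (Real.rpow_nonneg hx.le s)),
    inv_mul_cancel_left₀ hc.ne']

end Gamma

lemma abs_log_le_rpow_add_rpow_neg_div {x ε : ℝ} (hx : 0 < x) (hε : 0 < ε) :
    |Real.log x| ≤ (x ^ ε + x ^ (-ε)) / ε := by
  have log_le := Real.log_le_rpow_div hx.le hε
  have neg_log_le := Real.log_le_rpow_div (inv_nonneg.mpr hx.le) hε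
  rw [Real.log_inv, Real.inv_rpow hx.le, ← Real.rpow_neg hx.le] at neg_log_le
  have := div_pos (Real.rpow_pos_of_pos hx ε) hε
  have := div_pos (Real.rpow_pos_of_pos hx (-ε)) hε
  rw [add_div]
  exact abs_le'.mpr ⟨by linarith, by linarith⟩

lemma integrable_log_gammaMeasure {a r : ℝ} (ha : 0 < a) (hr : 0 < r) :
    Integrable Real.log (gammaMeasure a r) := by
  have integrable_bound : Integrable (fun x ↦ (x ^ (a / 2) + x ^ (-(a / 2))) / (a / 2))
      (gammaMeasure a r) :=
    ((integrable_rpow_gammaMeasure ha hr (by linarith)).add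
      (integrable_rpow_gammaMeasure ha hr (by linarith))).div_const _
  refine integrable_bound.mono' Real.measurable_log.aestronglyMeasurable ?_
  filter_upwards [ae_gammaMeasure_pos a r] with x hx
  exact abs_log_le_rpow_add_rpow_neg_div hx (half_pos ha)

/-- The parallel sum of `u` and `v`, which is half of their harmonic mean. -/
noncomputable def parallelSum (u v : ℝ) : ℝ := u * v / (u + v)

section ParallelSum

variable {u v : ℝ}

lemma parallelSum_pos (hu : 0 < u) (hv : 0 < v) : 0 < parallelSum u v :=
  div_pos (mul_pos hu hv) (add_pos hu hv)

lemma parallelSum_le_parallelSum_left {u' : ℝ} (hu : 0 < u) (huu' : u ≤ u') (hv : 0 < v) :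
    parallelSum u v ≤ parallelSum u' v := by
  rw [parallelSum, parallelSum, div_le_div_iff₀ (by linarith) (by linarith)]
  linarith [mul_le_mul_of_nonneg_right huu' (mul_pos hv hv).le]

lemma parallelSum_le_min (hu : 0 < u) (hv : 0 < v) : parallelSum u v ≤ min u v := by
  rw [parallelSum, div_le_iff₀ (add_pos hu hv), ← min_mul_max u v]
  have := lt_min hu hv
  gcongr
  exact max_le_add_of_nonneg hu.le hv.le

lemma min_div_two_le_parallelSum (hu : 0 < u) (hv : 0 < v) : min u v / 2 ≤ parallelSum u v := by
  rw [parallelSum, le_div_iff₀ (add_pos hu hv), ← min_mul_max u v, ← min_add_max u v]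
  linarith [mul_le_mul_of_nonneg_left (min_le_max (a := u) (b := v)) (lt_min hu hv).le]

lemma abs_log_parallelSum_le (hu : 0 < u) (hv : 0 < v) :
    |Real.log (parallelSum u v)| ≤ |Real.log u| + |Real.log v| + Real.log 2 := by
  have hmin : 0 < min u v := lt_min hu hv
  have log_min_le : |Real.log (min u v)| ≤ |Real.log u| + |Real.log v| := by
    rcases min_choice u v with h | h <;> rw [h]
    · exact le_add_of_nonneg_right (abs_nonneg _)
    · exact le_add_of_nonneg_left (abs_nonneg _)
  have upper := Real.log_le_log (parallelSum_pos hu hv) (parallelSum_le_min hu hv)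
  have lower := Real.log_le_log (half_pos hmin) (min_div_two_le_parallelSum hu hv)
  rw [Real.log_div hmin.ne' two_ne_zero] at lower
  have := Real.log_pos one_lt_two
  obtain ⟨_, _⟩ := abs_le.mp log_min_le
  exact abs_le.mpr ⟨by linarith, by linarith⟩

end ParallelSum

lemma monotoneOn_log_parallelSum_sqrt {y : ℝ} (hy : 0 < y) :
    MonotoneOn (fun x ↦ Real.log (parallelSum √x √y)) (Set.Ioi 0) := by
  intro x (hx : 0 < x) x' _ hxx'
  exact Real.log_le_log (parallelSum_pos (Real.sqrt_pos.mpr hx) (Real.sqrt_pos.mpr hy))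
    (parallelSum_le_parallelSum_left (Real.sqrt_pos.mpr hx) (Real.sqrt_le_sqrt hxx')
      (Real.sqrt_pos.mpr hy))

lemma integrable_log_parallelSum_sqrt {μ ν : Measure ℝ} [IsFiniteMeasure μ] [IsFiniteMeasure ν]
    (hμ : ∀ᵐ x ∂μ, 0 < x) (hν : ∀ᵐ y ∂ν, 0 < y) (hlogμ : Integrable Real.log μ)
    (hlogν : Integrable Real.log ν) :
    Integrable (fun z : ℝ × ℝ ↦ Real.log (parallelSum √z.1 √z.2)) (μ.prod ν) := by
  have integrable_bound : Integrable
      (fun z : ℝ × ℝ ↦ |Real.log z.1 / 2| + |Real.log z.2 / 2| + Real.log 2) (μ.prod ν) :=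
    (((hlogμ.div_const 2).abs.comp_fst ν).add ((hlogν.div_const 2).abs.comp_snd μ)).add
      (integrable_const _)
  refine integrable_bound.mono' ?_ ?_
  · unfold parallelSum
    exact Measurable.aestronglyMeasurable (by fun_prop)
  · filter_upwards [Measure.quasiMeasurePreserving_fst.ae hμ,
      Measure.quasiMeasurePreserving_snd.ae hν] with z hx hy
    rw [← Real.log_sqrt hx.le, ← Real.log_sqrt hy.le]
    exact abs_log_parallelSum_le (Real.sqrt_pos.mpr hx) (Real.sqrt_pos.mpr hy)

theorem expectation_log_harmonicmean_chi_general {a b r : ℝ} (ha : 0 < a) (hab : a ≤ b)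
    (hr : 0 < r) {ν : Measure ℝ} [IsFiniteMeasure ν] (hν : ∀ᵐ y ∂ν, 0 < y)
    (hlog : Integrable Real.log ν) :
    ∫ x, ∫ y, Real.log (parallelSum √x √y) ∂ν ∂gammaMeasure a r ≤
      ∫ x, ∫ y, Real.log (parallelSum √x √y) ∂ν ∂gammaMeasure b r := by
  have hb : 0 < b := ha.trans_le hab
  have := isProbabilityMeasure_gammaMeasure ha hr
  have := isProbabilityMeasure_gammaMeasure hb hr
  have integrable_a := integrable_log_parallelSum_sqrt (ae_gammaMeasure_pos a r) hν
    (integrable_log_gammaMeasure ha hr) hlog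
  have integrable_b := integrable_log_parallelSum_sqrt (ae_gammaMeasure_pos b r) hν
    (integrable_log_gammaMeasure hb hr) hlog
  calc ∫ x, ∫ y, Real.log (parallelSum √x √y) ∂ν ∂gammaMeasure a r
      = ∫ y, ∫ x, Real.log (parallelSum √x √y) ∂gammaMeasure a r ∂ν :=
        integral_integral_swap integrable_a
    _ ≤ ∫ y, ∫ x, Real.log (parallelSum √x √y) ∂gammaMeasure b r ∂ν := by
        refine integral_mono_ae integrable_a.integral_prod_right integrable_b.integral_prod_right ?_
        filter_upwards [hν, integrable_a.prod_left_ae, integrable_b.prod_left_ae] with y hy ha' hb'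
        exact integral_gammaMeasure_le_of_monotoneOn ha hab hr (monotoneOn_log_parallelSum_sqrt hy)
          ha' hb'
    _ = ∫ x, ∫ y, Real.log (parallelSum √x √y) ∂ν ∂gammaMeasure b r :=
        (integral_integral_swap integrable_b).symm

lemma chi2Density_eq_gammaPDFReal {m : ℕ} (hm : 1 ≤ m) {x : ℝ} (hx : 0 ≤ x) :
    chi2Density m x = gammaPDFReal m (1 / 2) x := by
  obtain ⟨k, rfl⟩ := Nat.exists_eq_add_of_le' hm
  rw [chi2Density, gammaPDFReal, if_pos hx, Real.rpow_natCast, Nat.cast_add_one,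
    Real.Gamma_nat_eq_factorial, add_sub_cancel_right, Real.rpow_natCast, Nat.add_sub_cancel,
    one_div_pow, neg_div, div_eq_inv_mul x, ← one_div]
  field_simp

lemma integral_mul_chi2Density {m : ℕ} (hm : 1 ≤ m) (f : ℝ → ℝ) :
    ∫ x in Set.Ioi 0, f x * chi2Density m x = ∫ x, f x ∂gammaMeasure m (1 / 2) := by
  rw [integral_gammaMeasure (Nat.cast_pos.mpr hm) one_half_pos]
  refine setIntegral_congr_fun measurableSet_Ioi fun x (hx : 0 < x) ↦ ?_
  simp only [chi2Density_eq_gammaPDFReal hm hx.le]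

lemma integral_integral_mul_chi2Density {i j : ℕ} (hi : 1 ≤ i) (hj : 1 ≤ j) (f : ℝ → ℝ → ℝ) :
    ∫ x in Set.Ioi 0, ∫ y in Set.Ioi 0, f x y * (chi2Density i x * chi2Density j y) =
      ∫ x, ∫ y, f x y ∂gammaMeasure j (1 / 2) ∂gammaMeasure i (1 / 2) := by
  rw [← integral_mul_chi2Density hi]
  refine integral_congr_ae (ae_of_all _ fun x ↦ ?_)
  simp only [mul_left_comm _ (chi2Density i x), integral_const_mul, integral_mul_chi2Density hj,
    mul_comm]

theorem expectation_log_harmonicmean_chi (i j : ℕ) (hi : 2 ≤ i) (hj : 1 ≤ j) :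
    (∫ x in Set.Ioi (0 : ℝ), ∫ y in Set.Ioi (0 : ℝ),
        Real.log (Real.sqrt x * Real.sqrt y / (Real.sqrt x + Real.sqrt y)) *
          (chi2Density i x * chi2Density j y)) ≥
    (∫ x in Set.Ioi (0 : ℝ), ∫ y in Set.Ioi (0 : ℝ),
        Real.log (Real.sqrt x * Real.sqrt y / (Real.sqrt x + Real.sqrt y)) *
          (chi2Density 2 x * chi2Density j y)) - (1 / 2) * Real.log 2 := by
  rw [integral_integral_mul_chi2Density (by lia) hj,
    integral_integral_mul_chi2Density one_le_two hj]
  have hj' : (0 : ℝ) < j := Nat.cast_pos.mpr hj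
  have := isProbabilityMeasure_gammaMeasure hj' one_half_pos
  exact (sub_le_self _ (by positivity)).trans <| expectation_log_harmonicmean_chi_general
    (Nat.cast_pos.mpr two_pos) (Nat.cast_le.mpr hi) one_half_pos (ae_gammaMeasure_pos j (1 / 2))
    (integrable_log_gammaMeasure hj' one_half_pos)
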